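/- arXiv:1609.03914 — 2 statements merged into one kernel-verified Lean document; each statement's English description precedes it below -/
import Mathlib

section
/- Suppose c > b. Define the Furstenberg IFS F = {f_i(z) = (b/c)z + d_i/c}_{i=1}^N on ℝ and its natural projection Π_AF(𝐢) = d_{i_1}/c + Σ_{k≥2} (d_{i_k}/c)·∏_{ℓ=1}^{k-1}(b/c). If the combined natural projection 𝐢 ↦ (Π(𝐢), Π_AF(𝐢)) from Σ to ℝ³ is injective, then the IFS S satisfies the transversality condition. -/
open MeasureTheory Filter Set Topology
open scoped ENNReal

noncomputable section

/-- One triangular affine map `S_i(x,y) = (c x + u_i, d_i x + b y + v_i)`. -/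
def Smap {N : ℕ} (c b : ℝ) (u v d : Fin N → ℝ) (i : Fin N) (p : ℝ × ℝ) : ℝ × ℝ :=
  (c * p.1 + u i, d i * p.1 + b * p.2 + v i)

/-- Composition along a finite word: `Sword [i₁,…,iₙ] = S_{i₁} ∘ ⋯ ∘ S_{iₙ}`. -/
def Sword {N : ℕ} (c b : ℝ) (u v d : Fin N → ℝ) : List (Fin N) → (ℝ × ℝ) → ℝ × ℝ
  | [] => id
  | i :: w => Smap c b u v d i ∘ Sword c b u v d w

/-- The closed unit square `[0,1]²`. -/
def unitSq : Set (ℝ × ℝ) := Set.Icc 0 1 ×ˢ Set.Icc 0 1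

/-- The length-`n` prefix of an infinite word, as a list. -/
def prefixWord {N : ℕ} (i : ℕ → Fin N) (n : ℕ) : List (Fin N) :=
  List.ofFn (fun k : Fin n => i k)

/-- The transversality condition: there is `c₃ > 0` such that for every `n` and all
`𝐢, 𝐣` with different first symbols, the projection to the `x`-axis of the intersection
of the two level-`n` cylinder parallelograms has diameter `< c₃ bⁿ`. -/
def Transversality (N : ℕ) (c b : ℝ) (u v d : Fin N → ℝ) : Prop :=
  ∃ c₃ > (0 : ℝ), ∀ (n : ℕ) (i j : ℕ → Fin N), i 0 ≠ j 0 →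
    Metric.diam (Prod.fst '' (Sword c b u v d (prefixWord i n) '' unitSq ∩
      Sword c b u v d (prefixWord j n) '' unitSq)) < c₃ * b ^ n

/-- The natural projection of the Furstenberg IFS `{z ↦ (b/c) z + dᵢ/c}`. -/
def PiAF {N : ℕ} (c b : ℝ) (d : Fin N → ℝ) (i : ℕ → Fin N) : ℝ :=
  ∑' k : ℕ, (d (i k) / c) * (b / c) ^ k

/-- Partial slope sums. -/
def slopeS {N : ℕ} (c b : ℝ) (d : Fin N → ℝ) (n : ℕ) (i : ℕ → Fin N) : ℝ :=
  ∑ k ∈ Finset.range n, (d (i k) / c) * (b / c) ^ k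

lemma prefixWord_succ' {N : ℕ} (i : ℕ → Fin N) (n : ℕ) :
    prefixWord i (n + 1) = i 0 :: prefixWord (fun m => i (m + 1)) n := by
  simp [prefixWord, List.ofFn_succ]

lemma Sword_prefix_succ {N : ℕ} (c b : ℝ) (u v d : Fin N → ℝ) (i : ℕ → Fin N) (n : ℕ)
    (p : ℝ × ℝ) :
    Sword c b u v d (prefixWord i (n + 1)) p =
      Smap c b u v d (i 0) (Sword c b u v d (prefixWord (fun m => i (m + 1)) n) p) := by
  rw [prefixWord_succ']; rfl

lemma Sword_prefix_add {N : ℕ} (c b : ℝ) (u v d : Fin N → ℝ) (n k : ℕ) (p : ℝ × ℝ) :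
    ∀ i : ℕ → Fin N, Sword c b u v d (prefixWord i (n + k)) p =
      Sword c b u v d (prefixWord i n)
        (Sword c b u v d (prefixWord (fun m => i (m + n)) k) p) := by
  induction n with
  | zero => intro i; simp [prefixWord, Sword]
  | succ n ih =>
    intro i
    rw [show n + 1 + k = (n + k) + 1 by ring, Sword_prefix_succ, Sword_prefix_succ, ih]
    rfl

lemma slopeS_succ {N : ℕ} (c b : ℝ) (d : Fin N → ℝ) (n : ℕ) (i : ℕ → Fin N) :
    slopeS c b d (n + 1) i = d (i 0) / c + (b / c) * slopeS c b d n (fun m => i (m + 1)) := by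
  unfold slopeS
  rw [Finset.sum_range_succ', Finset.mul_sum, add_comm]
  congr 1
  · simp
  · exact Finset.sum_congr rfl fun k _ => by ring

lemma Sword_formula {N : ℕ} (c b : ℝ) (hc : c ≠ 0) (u v d : Fin N → ℝ) (n : ℕ) (p : ℝ × ℝ) :
    ∀ i : ℕ → Fin N, Sword c b u v d (prefixWord i n) p =
      ((Sword c b u v d (prefixWord i n) 0).1 + c ^ n * p.1,
       (Sword c b u v d (prefixWord i n) 0).2 + c ^ n * slopeS c b d n i * p.1 + b ^ n * p.2) := by
  induction n with
  | zero => intro i; simp [prefixWord, Sword, slopeS]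
  | succ n ih =>
    intro i
    rw [Sword_prefix_succ, Sword_prefix_succ, ih, slopeS_succ]
    simp only [Smap]
    ext
    · simp only; ring
    · simp only; field_simp; ring

lemma Sword_mem {N : ℕ} (c b : ℝ) (u v d : Fin N → ℝ)
    (hmaps : ∀ i, Smap c b u v d i '' unitSq ⊆ unitSq) (n : ℕ) (p : ℝ × ℝ) (hp : p ∈ unitSq) :
    ∀ i : ℕ → Fin N, Sword c b u v d (prefixWord i n) p ∈ unitSq := by
  induction n with
  | zero => intro i; simpa [prefixWord, Sword] using hp
  | succ n ih =>
    intro i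
    rw [Sword_prefix_succ]
    exact hmaps _ ⟨_, ih _, rfl⟩

lemma Sword_continuous {N : ℕ} (c b : ℝ) (u v d : Fin N → ℝ) (n : ℕ) :
    Continuous (fun i : ℕ → Fin N => Sword c b u v d (prefixWord i n) 0) := by
  have h : Continuous (fun i : ℕ → Fin N => (fun k : Fin n => i k)) := by fun_prop
  have h2 : Continuous (fun w : Fin n → Fin N => Sword c b u v d (List.ofFn w) 0) :=
    continuous_of_discreteTopology
  exact h2.comp h

lemma exists_summable_bound {N : ℕ} (c b : ℝ) (hb0 : 0 < b) (hc0 : 0 < c) (hcb : b < c)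
    (d : Fin N → ℝ) : ∃ g : ℕ → ℝ, Summable g ∧
      ∀ k (i : ℕ → Fin N), ‖(d (i k) / c) * (b / c) ^ k‖ ≤ g k := by
  refine ⟨fun k => (∑ a, |d a / c|) * (b / c) ^ k, ?_, ?_⟩
  · exact (summable_geometric_of_lt_one (by positivity) ((div_lt_one hc0).2 hcb)).mul_left _
  · intro k i
    rw [norm_mul, Real.norm_eq_abs, norm_pow, Real.norm_of_nonneg (by positivity : 0 ≤ b / c)]
    refine mul_le_mul_of_nonneg_right ?_ (by positivity)
    exact Finset.single_le_sum (f := fun a => |d a / c|) (fun _ _ => abs_nonneg _)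
      (Finset.mem_univ _)

lemma diam_bound {N : ℕ} (b c : ℝ) (hb0 : 0 < b) (hc0 : 0 < c) (hcb : b < c)
    (u v d : Fin N → ℝ) : ∃ C : ℝ, 0 < C ∧ ∀ (n : ℕ) (i : ℕ → Fin N) (p : ℝ × ℝ), p ∈ unitSq →
      dist (Sword c b u v d (prefixWord i n) p) (Sword c b u v d (prefixWord i n) 0)
        ≤ C * c ^ n := by
  obtain ⟨g, hg, hgb⟩ := exists_summable_bound c b hb0 hc0 hcb d
  have hK : ∀ n (i : ℕ → Fin N), |slopeS c b d n i| ≤ ∑' k, |g k| := by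
    intro n i
    refine (Finset.abs_sum_le_sum_abs _ _).trans ?_
    refine (Finset.sum_le_sum fun k _ => ?_).trans
      (hg.abs.sum_le_tsum (Finset.range n) fun _ _ => abs_nonneg _)
    exact (hgb k i).trans (le_abs_self _)
  set K := ∑' k, |g k|
  have hK0 : 0 ≤ K := tsum_nonneg fun _ => abs_nonneg _
  refine ⟨K + 1, by positivity, fun n i p hp => ?_⟩
  obtain ⟨⟨h1, h2⟩, h3, h4⟩ := hp
  have hcn : 0 < c ^ n := by positivity
  have hbn : 0 < b ^ n := by positivity
  have hbc : b ^ n ≤ c ^ n := by gcongr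
  rw [Sword_formula c b hc0.ne' u v d n p i, Prod.dist_eq, max_le_iff, Real.dist_eq, Real.dist_eq]
  constructor
  · simp only [add_sub_cancel_left]
    rw [abs_of_nonneg (by positivity)]
    nlinarith [mul_nonneg hK0 hcn.le]
  · have e : ∀ A B D : ℝ, A + B + D - A = B + D := fun A B D => by ring
    simp only [e]
    refine (abs_add_le _ _).trans ?_
    rw [abs_mul, abs_mul, abs_of_pos hcn, abs_of_nonneg h1, abs_of_nonneg (mul_nonneg hbn.le h3)]
    have a1 : c ^ n * |slopeS c b d n i| * p.1 ≤ c ^ n * K * 1 := by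
      gcongr
      exact hK n i
    have a2 : b ^ n * p.2 ≤ c ^ n * 1 := by gcongr
    linarith

lemma zero_mem_unitSq : (0 : ℝ × ℝ) ∈ unitSq := by
  exact ⟨⟨le_rfl, zero_le_one⟩, ⟨le_rfl, zero_le_one⟩⟩

/-- if the combined natural projection `𝐢 ↦ (Π(𝐢), Π_AF(𝐢))` is injective,
then the IFS `S` satisfies the transversality condition. -/
theorem statement0 (N : ℕ) (hN : 2 ≤ N) (b c : ℝ)
    (hb0 : 0 < b) (hb1 : b < 1) (hc0 : 0 < c) (hc1 : c < 1)
    (u v d : Fin N → ℝ)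
    (hmaps : ∀ i, Smap c b u v d i '' unitSq ⊆ unitSq)
    (hcb : b < c)
    (Pi : (ℕ → Fin N) → ℝ × ℝ)
    (hPi : ∀ i, Tendsto (fun n => Sword c b u v d (prefixWord i n) 0) atTop (nhds (Pi i)))
    (hinj : Function.Injective (fun i => (Pi i, PiAF c b d i))) :
    Transversality N c b u v d := by
  have hcn0 := hc0.ne'
  obtain ⟨C, hC0, hC⟩ := diam_bound b c hb0 hc0 hcb u v d
  obtain ⟨g, hg, hgb⟩ := exists_summable_bound c b hb0 hc0 hcb d
  -- distance from approximants to the limit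
  have hlim : ∀ n i, dist (Pi i) (Sword c b u v d (prefixWord i n) 0) ≤ C * c ^ n := by
    intro n i
    have ht : Tendsto (fun k => dist (Sword c b u v d (prefixWord i (n + k)) 0)
        (Sword c b u v d (prefixWord i n) 0)) atTop
        (nhds (dist (Pi i) (Sword c b u v d (prefixWord i n) 0))) := by
      have h1 : Tendsto (fun k => n + k) atTop atTop :=
        tendsto_atTop_mono (fun k => Nat.le_add_left k n) tendsto_id
      exact ((hPi i).comp h1).dist tendsto_const_nhds
    refine le_of_tendsto' ht fun k => ?_
    rw [Sword_prefix_add]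
    exact hC n i _ (Sword_mem c b u v d hmaps k 0 zero_mem_unitSq _)
  have hpow : Tendsto (fun n : ℕ => C * c ^ n) atTop (nhds 0) := by
    simpa using (tendsto_pow_atTop_nhds_zero_of_lt_one hc0.le hc1).const_mul C
  have hPic : Continuous Pi := by
    have hu : TendstoUniformly (fun n i => Sword c b u v d (prefixWord i n) 0) Pi atTop := by
      rw [Metric.tendstoUniformly_iff]
      intro ε hε
      filter_upwards [hpow.eventually (gt_mem_nhds hε)] with n hn i
      exact (hlim n i).trans_lt hn
    exact hu.continuous (Frequently.of_forall fun n => Sword_continuous c b u v d n)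
  have hAFc : Continuous (PiAF c b d) := by
    refine continuous_tsum (fun k => ?_) hg hgb
    have h2 : Continuous (fun a : Fin N => d a / c * (b / c) ^ k) :=
      continuous_of_discreteTopology
    exact h2.comp (continuous_apply k)
  have hAFu : TendstoUniformly (slopeS c b d) (PiAF c b d) atTop :=
    tendstoUniformly_tsum_nat hg hgb
  have hcomp : IsCompact {q : (ℕ → Fin N) × (ℕ → Fin N) | q.1 0 ≠ q.2 0} := by
    apply IsClosed.isCompact
    have h : Continuous (fun q : (ℕ → Fin N) × (ℕ → Fin N) => (q.1 0, q.2 0)) := by fun_prop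
    exact (isClosed_discrete {a : Fin N × Fin N | a.1 ≠ a.2}).preimage h
  obtain ⟨δ, hδ0, hδ⟩ := hcomp.exists_forall_le'
    (f := fun q => dist (Pi q.1, PiAF c b d q.1) (Pi q.2, PiAF c b d q.2)) (a := 0)
    (by fun_prop)
    (by
      intro q hq
      rw [dist_pos]
      intro h
      exact hq (congrFun (hinj h) 0))
  rw [Metric.tendstoUniformly_iff] at hAFu
  obtain ⟨n₀, hn₀⟩ := eventually_atTop.1 ((hAFu (δ / 4) (by positivity)).and
    (hpow.eventually (gt_mem_nhds (show (0 : ℝ) < δ / 4 by positivity))))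
  refine ⟨4 / δ + 1 / b ^ n₀ + 1, by positivity, fun n i j hij => ?_⟩
  have hbn : 0 < b ^ n := by positivity
  suffices h : Metric.diam (Prod.fst '' (Sword c b u v d (prefixWord i n) '' unitSq ∩
      Sword c b u v d (prefixWord j n) '' unitSq)) ≤ (4 / δ + 1 / b ^ n₀) * b ^ n by
    linarith
  apply Metric.diam_le_of_forall_dist_le (by positivity)
  rintro _ ⟨p, ⟨⟨p₁, hp₁, hpe₁⟩, ⟨p₂, hp₂, hpe₂⟩⟩, rfl⟩ _ ⟨q, ⟨⟨q₁, hq₁, hqe₁⟩, ⟨q₂, hq₂, hqe₂⟩⟩, rfl⟩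
  rw [Real.dist_eq, add_mul]
  rcases lt_or_ge n n₀ with hn | hn
  · have hp : p ∈ unitSq := hpe₁ ▸ Sword_mem c b u v d hmaps n p₁ hp₁ i
    have hq : q ∈ unitSq := hqe₁ ▸ Sword_mem c b u v d hmaps n q₁ hq₁ i
    obtain ⟨⟨h1, h2⟩, -⟩ := hp
    obtain ⟨⟨h3, h4⟩, -⟩ := hq
    have h5 : |p.1 - q.1| ≤ 1 := by rw [abs_le]; constructor <;> linarith
    have h6 : 1 ≤ 1 / b ^ n₀ * b ^ n := by
      rw [one_div_mul_eq_div, one_le_div (by positivity)]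
      exact pow_le_pow_of_le_one hb0.le hb1.le hn.le
    have h7 : 0 ≤ 4 / δ * b ^ n := by positivity
    linarith
  · obtain ⟨hs, hcn⟩ := hn₀ n hn
    have hd := hδ (i, j) hij
    have hPd : dist (Pi i) (Pi j) < δ := by
      have e1 := hlim n i
      have e2 := hlim n j
      have e3 := hC n i p₁ hp₁
      have e4 := hC n j p₂ hp₂
      rw [hpe₁] at e3
      rw [hpe₂] at e4
      have t1 := dist_triangle (Pi i) (Sword c b u v d (prefixWord i n) 0) p
      have t2 := dist_triangle (Pi j) (Sword c b u v d (prefixWord j n) 0) p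
      have t3 := dist_triangle_right (Pi i) (Pi j) p
      rw [dist_comm p] at e3 e4
      linarith
    have hAd : δ ≤ |PiAF c b d i - PiAF c b d j| := by
      rw [Prod.dist_eq, le_max_iff] at hd
      rcases hd with hd | hd
      · exact absurd hd (not_le.2 hPd)
      · exact hd
    have hsd : δ / 2 ≤ |slopeS c b d n i - slopeS c b d n j| := by
      have e1 := hs i
      have e2 := hs j
      rw [Real.dist_eq] at e1 e2
      have t := abs_sub_abs_le_abs_sub (PiAF c b d i - PiAF c b d j)
        (slopeS c b d n i - slopeS c b d n j)
      have t2 := abs_sub (PiAF c b d i - slopeS c b d n i) (PiAF c b d j - slopeS c b d n j)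
      have t3 : PiAF c b d i - PiAF c b d j - (slopeS c b d n i - slopeS c b d n j) =
        (PiAF c b d i - slopeS c b d n i) - (PiAF c b d j - slopeS c b d n j) := by ring
      rw [t3] at t
      linarith
    have hstrip : ∀ (k : ℕ → Fin N) (a a' z z' : ℝ × ℝ), a ∈ unitSq → a' ∈ unitSq →
        Sword c b u v d (prefixWord k n) a = z → Sword c b u v d (prefixWord k n) a' = z' →
        |(z.2 - z'.2) - slopeS c b d n k * (z.1 - z'.1)| ≤ b ^ n := by
      rintro k a a' z z' ⟨-, h1, h2⟩ ⟨-, h3, h4⟩ rfl rfl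
      rw [Sword_formula c b hcn0 u v d n a k, Sword_formula c b hcn0 u v d n a' k]
      have e : ∀ X Y s : ℝ, (Y + c ^ n * s * a.1 + b ^ n * a.2) - (Y + c ^ n * s * a'.1 + b ^ n * a'.2)
        - s * ((X + c ^ n * a.1) - (X + c ^ n * a'.1)) = b ^ n * (a.2 - a'.2) := by
        intros; ring
      simp only [e]
      rw [abs_mul, abs_of_pos hbn]
      have : |a.2 - a'.2| ≤ 1 := by rw [abs_le]; constructor <;> linarith
      nlinarith
    have s1 := hstrip i p₁ q₁ p q hp₁ hq₁ hpe₁ hqe₁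
    have s2 := hstrip j p₂ q₂ p q hp₂ hq₂ hpe₂ hqe₂
    have s3 : |slopeS c b d n i - slopeS c b d n j| * |p.1 - q.1| ≤ 2 * b ^ n := by
      rw [← abs_mul]
      rw [abs_le] at s1 s2 ⊢
      constructor <;> nlinarith
    have s4 : δ / 2 * |p.1 - q.1| ≤ 2 * b ^ n :=
      (mul_le_mul_of_nonneg_right hsd (abs_nonneg _)).trans s3
    have s5 : |p.1 - q.1| ≤ 4 / δ * b ^ n := by
      rw [div_mul_eq_mul_div, le_div_iff₀ hδ0]
      linarith
    have s6 : 0 ≤ 1 / b ^ n₀ * b ^ n := by positivity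
    linarith

end
end

section
/- Suppose c > b. Define the three-dimensional IFS S̃ = {S̃_i(x,y,z) = (S_i(x,y), (b z + d_i)/c)}_{i=1}^N on ℝ³. If S satisfies the transversality condition and moreover S_i([0,1]²) ⊂ (0,1)² for all i = 1,…,N, then S̃ satisfies the strong separation property: there exists a nonempty open set V ⊂ ℝ³ with S̃_i(V) ⊂ V for all i and with the closures of S̃_i(V) and S̃_j(V) disjoint for all i ≠ j. -/
open MeasureTheory Filter Set Topology
open scoped ENNReal

noncomputable section

/-- The lifted three-dimensional IFS `S̃_i(x,y,z) = (S_i(x,y), (b z + d_i)/c)`. -/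
def Stilde {N : ℕ} (c b : ℝ) (u v d : Fin N → ℝ) (i : Fin N) (p : ℝ × ℝ × ℝ) :
    ℝ × ℝ × ℝ :=
  ((Smap c b u v d i (p.1, p.2.1)).1, (Smap c b u v d i (p.1, p.2.1)).2,
    (b * p.2.2 + d i) / c)


/-- Words of the lifted IFS. -/
def Tword {N : ℕ} (c b : ℝ) (u v d : Fin N → ℝ) : List (Fin N) → (ℝ × ℝ × ℝ) → ℝ × ℝ × ℝ
  | [] => id
  | i :: w => Stilde c b u v d i ∘ Tword c b u v d w

/-- Iterates of a set under the lifted IFS. -/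
def Titer {N : ℕ} (c b : ℝ) (u v d : Fin N → ℝ) (W : Set (ℝ × ℝ × ℝ)) : ℕ → Set (ℝ × ℝ × ℝ)
  | 0 => W
  | n + 1 => ⋃ k, Stilde c b u v d k '' Titer c b u v d W n

theorem word_formula {N : ℕ} (c b : ℝ) (hc : c ≠ 0) (u v d : Fin N → ℝ) (l : List (Fin N)) :
    ∃ A D B : ℝ, (∀ x y, Sword c b u v d l (x, y) =
        (c ^ l.length * x + A, D * x + b ^ l.length * y + B)) ∧
      ∀ x y z, Tword c b u v d l (x, y, z) =
        (c ^ l.length * x + A, D * x + b ^ l.length * y + B,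
          (b ^ l.length * z + D) / c ^ l.length) := by
  induction l with
  | nil => exact ⟨0, 0, 0, by simp [Sword], by simp [Tword]⟩
  | cons i w ih =>
    obtain ⟨A, D, B, h1, h2⟩ := ih
    refine ⟨c * A + u i, d i * c ^ w.length + b * D, d i * A + b * B + v i, ?_, ?_⟩
    · intro x y
      simp only [Sword, Function.comp, h1, Smap, List.length_cons, Prod.mk.injEq]
      constructor <;> ring
    · intro x y z
      simp only [Tword, Function.comp, h2, Stilde, Smap, List.length_cons, Prod.mk.injEq]
      refine ⟨by ring, by ring, ?_⟩
      have : c ^ w.length ≠ 0 := pow_ne_zero _ hc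
      field_simp
      ring

theorem Stilde_open {N : ℕ} (c b : ℝ) (hc : c ≠ 0) (hb : b ≠ 0) (u v d : Fin N → ℝ) (i : Fin N)
    (U : Set (ℝ × ℝ × ℝ)) (hU : IsOpen U) : IsOpen (Stilde c b u v d i '' U) := by
  let g : ℝ × ℝ × ℝ → ℝ × ℝ × ℝ := fun p =>
    ((p.1 - u i) / c, (p.2.1 - v i - d i * ((p.1 - u i) / c)) / b, (c * p.2.2 - d i) / b)
  have hg : Continuous g := by fun_prop
  rw [Set.image_eq_preimage_of_inverse (g := g)]
  · exact hU.preimage hg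
  · rintro ⟨x, y, z⟩
    simp only [g, Stilde, Smap, Prod.mk.injEq]
    refine ⟨by field_simp; ring, by field_simp; ring, by field_simp; ring⟩
  · rintro ⟨x, y, z⟩
    simp only [g, Stilde, Smap, Prod.mk.injEq]
    refine ⟨by field_simp; ring, by field_simp; ring, by field_simp; ring⟩

theorem Stilde_cont {N : ℕ} (c b : ℝ) (u v d : Fin N → ℝ) (i : Fin N) :
    Continuous (Stilde c b u v d i) := by
  unfold Stilde Smap
  fun_prop

theorem Titer_word {N : ℕ} (c b : ℝ) (u v d : Fin N → ℝ) (W : Set (ℝ × ℝ × ℝ)) (n : ℕ) :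
    ∀ x ∈ Titer c b u v d W (n + 1), ∃ l : List (Fin N), l.length = n ∧ ∃ k, ∃ q ∈ W,
      x = Tword c b u v d l (Stilde c b u v d k q) := by
  induction n with
  | zero =>
    intro x hx
    obtain ⟨k, q, hq, rfl⟩ := Set.mem_iUnion.1 hx
    exact ⟨[], rfl, k, q, hq, rfl⟩
  | succ n ih =>
    intro x hx
    obtain ⟨i, y, hy, rfl⟩ := Set.mem_iUnion.1 hx
    obtain ⟨l, hl, k, q, hq, rfl⟩ := ih y hy
    exact ⟨i :: l, by simp [hl], k, q, hq, rfl⟩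

theorem prefixWord_list {N : ℕ} (i : Fin N) (l : List (Fin N)) :
    prefixWord (fun k => (i :: l).getD k i) (l.length + 1) = i :: l := by
  unfold prefixWord
  apply List.ext_getElem
  · simp
  · intro n h1 h2
    simp only [List.getElem_ofFn]
    rw [List.getD_eq_getElem _ _ h2]

/-- The key geometric estimate. -/
theorem key {N : ℕ} (c b : ℝ) (hb0 : 0 < b) (hc0 : 0 < c) (u v d : Fin N → ℝ)
    (l m : List (Fin N)) (n : ℕ) (hl : l.length = n) (hm : m.length = n)
    (R δ : ℝ) (hR : 1 ≤ R) (hδ : 0 < δ) (p q : ℝ × ℝ × ℝ)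
    (hp : ∀ s t : ℝ, |s| ≤ δ → |t| ≤ δ → (p.1 + s, p.2.1 + t) ∈ unitSq)
    (hq : ∀ s t : ℝ, |s| ≤ δ → |t| ≤ δ → (q.1 + s, q.2.1 + t) ∈ unitSq)
    (hpR : |p.2.2| ≤ R) (hqR : |q.2.2| ≤ R)
    (h : Tword c b u v d l p = Tword c b u v d m q) :
    δ / (2 * R) * c ^ n ≤ Metric.diam (Prod.fst '' (Sword c b u v d l '' unitSq ∩
      Sword c b u v d m '' unitSq)) := by
  obtain ⟨A, D, B, h1, h2⟩ := word_formula c b hc0.ne' u v d l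
  obtain ⟨A', D', B', h1', h2'⟩ := word_formula c b hc0.ne' u v d m
  obtain ⟨px, py, pz⟩ := p
  obtain ⟨qx, qy, qz⟩ := q
  rw [h2, h2', hl, hm] at h
  rw [hl] at h1
  rw [hm] at h1'
  simp only [Prod.mk.injEq] at h hp hq hpR hqR
  obtain ⟨e1, e2, e3⟩ := h
  have hcn : 0 < c ^ n := pow_pos hc0 n
  have hbn : 0 < b ^ n := pow_pos hb0 n
  have e3' : b ^ n * pz + D = b ^ n * qz + D' := by
    field_simp at e3
    exact e3
  have hR0 : 0 < R := by linarith
  set τ := δ / (2 * R) with hτ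
  have hτ0 : 0 < τ := by positivity
  have hτR : τ * (2 * R) = δ := by rw [hτ]; field_simp
  have hτδ : τ ≤ δ := by nlinarith
  have hmem : ∀ t : ℝ, |t| ≤ τ → c ^ n * (px + t) + A ∈
      Prod.fst '' (Sword c b u v d l '' unitSq ∩ Sword c b u v d m '' unitSq) := by
    intro t ht
    refine ⟨(c ^ n * (px + t) + A, D * (px + t) + b ^ n * (py + 0) + B), ⟨?_, ?_⟩, rfl⟩
    · exact ⟨(px + t, py + 0), hp t 0 (ht.trans hτδ) (by simpa using hδ.le), h1 _ _⟩
    · refine ⟨(qx + t, qy + (qz - pz) * t), hq t _ (ht.trans hτδ) ?_, ?_⟩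
      · rw [abs_mul, ← hτR, mul_comm τ]
        have : |qz - pz| ≤ 2 * R := (abs_sub _ _).trans (by linarith)
        exact mul_le_mul this ht (abs_nonneg _) (by linarith)
      · rw [h1', Prod.mk.injEq]
        constructor
        · linarith
        · linear_combination -e2 - t * e3'
  have hbdd : Bornology.IsBounded (Prod.fst '' (Sword c b u v d l '' unitSq ∩
      Sword c b u v d m '' unitSq)) := by
    refine (Metric.isBounded_Icc A (c ^ n + A)).subset ?_
    rintro _ ⟨_, ⟨⟨⟨x, y⟩, hxy, rfl⟩, -⟩, rfl⟩
    rw [h1]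
    obtain ⟨⟨hx0, hx1⟩, -⟩ := hxy
    simp only at hx0 hx1
    constructor
    · simp only; nlinarith
    · simp only; nlinarith
  have := Metric.dist_le_diam_of_mem hbdd (hmem τ (abs_of_pos hτ0).le)
    (hmem 0 (by simpa using hτ0.le))
  refine le_trans ?_ this
  rw [Real.dist_eq]
  refine le_trans (le_of_eq ?_) (le_abs_self _)
  ring

/-- if `S` satisfies transversality and maps the unit square into the open
unit square, then the lifted IFS `S̃` satisfies the strong separation property. -/
theorem statement1 (N : ℕ) (hN : 2 ≤ N) (b c : ℝ)
    (hb0 : 0 < b) (hb1 : b < 1) (hc0 : 0 < c) (hc1 : c < 1)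
    (u v d : Fin N → ℝ)
    (hmaps : ∀ i, Smap c b u v d i '' unitSq ⊆ unitSq)
    (hcb : b < c)
    (htrans : Transversality N c b u v d)
    (hopen : ∀ i, Smap c b u v d i '' unitSq ⊆ Set.Ioo 0 1 ×ˢ Set.Ioo 0 1) :
    ∃ V : Set (ℝ × ℝ × ℝ), V.Nonempty ∧ IsOpen V ∧
      (∀ i, Stilde c b u v d i '' V ⊆ V) ∧
      (∀ i j, i ≠ j →
        closure (Stilde c b u v d i '' V) ∩ closure (Stilde c b u v d j '' V) = ∅) := by
  obtain ⟨c₃, hc₃, htr⟩ := htrans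
  -- the margin
  have hKc : IsCompact (⋃ k, Smap c b u v d k '' unitSq) := by
    refine isCompact_iUnion fun k => ?_
    refine (isCompact_Icc.prod isCompact_Icc).image ?_
    unfold Smap
    fun_prop
  obtain ⟨δ, hδ, hthick⟩ := hKc.exists_cthickening_subset_open
    (isOpen_Ioo.prod isOpen_Ioo) (Set.iUnion_subset hopen)
  have hmargin : ∀ k, ∀ p ∈ unitSq, ∀ s t : ℝ, |s| ≤ δ → |t| ≤ δ →
      ((Smap c b u v d k p).1 + s, (Smap c b u v d k p).2 + t) ∈ unitSq := by
    intro k p hp s t hs ht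
    have : ((Smap c b u v d k p).1 + s, (Smap c b u v d k p).2 + t) ∈
        (Set.Ioo (0:ℝ) 1 ×ˢ Set.Ioo (0:ℝ) 1) := by
      apply hthick
      refine Metric.mem_cthickening_of_dist_le _ (Smap c b u v d k p) _ _
        (Set.mem_iUnion.2 ⟨k, p, hp, rfl⟩) ?_
      rw [Prod.dist_eq]
      simp [Real.dist_eq, hs, ht]
    exact Set.prod_mono Set.Ioo_subset_Icc_self Set.Ioo_subset_Icc_self this
  -- the height
  obtain ⟨R, hR1, hR⟩ : ∃ R : ℝ, 1 ≤ R ∧ ∀ k, |d k| < (c - b) * R := by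
    have hcb' : 0 < c - b := by linarith
    have hS : 0 ≤ ∑ k, |d k| := Finset.sum_nonneg fun _ _ => abs_nonneg _
    refine ⟨1 + (∑ k, |d k|) / (c - b), by have := div_nonneg hS hcb'.le; linarith, fun k => ?_⟩
    have h1 : |d k| ≤ ∑ k, |d k| :=
      Finset.single_le_sum (f := fun k => |d k|) (fun _ _ => abs_nonneg _) (Finset.mem_univ k)
    have h2 : (c - b) * (1 + (∑ k, |d k|) / (c - b)) = (c - b) + ∑ k, |d k| := by
      field_simp
    linarith
  set W : Set (ℝ × ℝ × ℝ) := Set.Ioo 0 1 ×ˢ Set.Ioo 0 1 ×ˢ Set.Ioo (-R) R with hW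
  set Q : Set (ℝ × ℝ × ℝ) := Set.Icc 0 1 ×ˢ Set.Icc 0 1 ×ˢ Set.Icc (-R) R with hQ
  have hWQ : W ⊆ Q := Set.prod_mono Set.Ioo_subset_Icc_self
    (Set.prod_mono Set.Ioo_subset_Icc_self Set.Ioo_subset_Icc_self)
  have hQW : ∀ k, ∀ p ∈ Q, Stilde c b u v d k p ∈ W := by
    rintro k ⟨x, y, z⟩ ⟨hx, hy, hz⟩
    have h1 := hopen k ⟨(x, y), ⟨hx, hy⟩, rfl⟩
    refine ⟨h1.1, h1.2, ?_⟩
    have h2 := abs_lt.1 (hR k)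
    obtain ⟨hz1, hz2⟩ := hz
    simp only at hz1 hz2
    simp only [Stilde, Set.mem_Ioo]
    rw [lt_div_iff₀ hc0, div_lt_iff₀ hc0]
    constructor <;> nlinarith
  -- the iterates
  have hopenT : ∀ n, IsOpen (Titer c b u v d W n) := by
    intro n
    induction n with
    | zero => exact isOpen_Ioo.prod (isOpen_Ioo.prod isOpen_Ioo)
    | succ n ih => exact isOpen_iUnion fun k => Stilde_open c b hc0.ne' hb0.ne' u v d k _ ih
  have hneT : ∀ n, (Titer c b u v d W n).Nonempty := by
    intro n
    induction n with
    | zero =>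
      refine ⟨(1/2, 1/2, 0), ?_, ?_, ?_⟩ <;> constructor <;> norm_num <;> linarith
    | succ n ih =>
      obtain ⟨x, hx⟩ := ih
      exact ⟨_, Set.mem_iUnion.2 ⟨⟨0, by omega⟩, x, hx, rfl⟩⟩
  have hanti : ∀ n, Titer c b u v d W (n + 1) ⊆ Titer c b u v d W n := by
    intro n
    induction n with
    | zero =>
      intro x hx
      obtain ⟨k, q, hq, rfl⟩ := Set.mem_iUnion.1 hx
      exact hQW k q (hWQ hq)
    | succ n ih =>
      exact Set.iUnion_mono fun k => Set.image_mono ih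
  have hsub : ∀ n, Titer c b u v d W n ⊆ Titer c b u v d Q n := by
    intro n
    induction n with
    | zero => exact hWQ
    | succ n ih => exact Set.iUnion_mono fun k => Set.image_mono ih
  have hcpt : ∀ n, IsCompact (Titer c b u v d Q n) := by
    intro n
    induction n with
    | zero => exact isCompact_Icc.prod (isCompact_Icc.prod isCompact_Icc)
    | succ n ih => exact isCompact_iUnion fun k => ih.image (Stilde_cont c b u v d k)
  -- choice of the level
  obtain ⟨n, hn⟩ : ∃ n : ℕ, c₃ * b ^ (n + 1) < δ / (2 * R) * c ^ (n + 1) := by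
    have hpos : 0 < δ / (2 * R) / c₃ := by
      have : 0 < R := by linarith
      positivity
    obtain ⟨n, hn⟩ := exists_pow_lt_of_lt_one hpos ((div_lt_one hc0).2 hcb)
    refine ⟨n, ?_⟩
    have hcn : 0 < c ^ n := pow_pos hc0 n
    have hbn : 0 < b ^ n := pow_pos hb0 n
    rw [div_pow, div_lt_div_iff₀ hcn hc₃] at hn
    rw [pow_succ, pow_succ]
    calc c₃ * (b ^ n * b) = (b ^ n * c₃) * b := by ring
      _ < (δ / (2 * R) * c ^ n) * b := by gcongr
      _ ≤ (δ / (2 * R) * c ^ n) * c := by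
        apply mul_le_mul_of_nonneg_left hcb.le
        exact (lt_trans (by positivity) hn).le
      _ = _ := by ring
  refine ⟨Titer c b u v d W (n + 1), hneT _, hopenT _, ?_, ?_⟩
  · intro i
    exact (Set.subset_iUnion (fun k => Stilde c b u v d k '' Titer c b u v d W (n + 1)) i).trans
      (hanti (n + 1))
  · intro i j hij
    have hcl : ∀ i, closure (Stilde c b u v d i '' Titer c b u v d W (n + 1)) ⊆
        Stilde c b u v d i '' Titer c b u v d Q (n + 1) := fun i =>
      closure_minimal (Set.image_mono (hsub _))
        ((hcpt (n + 1)).image (Stilde_cont c b u v d i)).isClosed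
    rw [Set.eq_empty_iff_forall_notMem]
    rintro x ⟨hxi, hxj⟩
    obtain ⟨p, hp, rfl⟩ := hcl i hxi
    obtain ⟨q, hq, hqe⟩ := hcl j hxj
    obtain ⟨l, hl, k, p', hp', rfl⟩ := Titer_word c b u v d Q n p hp
    obtain ⟨m, hm, k', q', hq', rfl⟩ := Titer_word c b u v d Q n q hq
    have hz : ∀ k, ∀ p ∈ Q, |(Stilde c b u v d k p).2.2| ≤ R := fun k p hp =>
      abs_le.2 ⟨(hQW k p hp).2.2.1.le, (hQW k p hp).2.2.2.le⟩
    have hkey := key c b hb0 hc0 u v d (i :: l) (j :: m) (n + 1) (by simp [hl]) (by simp [hm])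
      R δ hR1 hδ (Stilde c b u v d k p') (Stilde c b u v d k' q')
      (hmargin k (p'.1, p'.2.1) ⟨hp'.1, hp'.2.1⟩) (hmargin k' (q'.1, q'.2.1) ⟨hq'.1, hq'.2.1⟩)
      (hz k p' hp') (hz k' q' hq') hqe.symm
    have ht := htr (n + 1) (fun k => (i :: l).getD k i) (fun k => (j :: m).getD k j)
      (by simpa using hij)
    have e1 := prefixWord_list i l
    have e2 := prefixWord_list j m
    rw [hl] at e1
    rw [hm] at e2
    rw [e1, e2] at ht
    linarith

end
end
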